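/- Let H : [0,1]×ℝ² → ℝ be smooth with compact support, let {φ^t} be the flow of the time-dependent Hamiltonian vector field X_{H_t}, and let φ = φ¹ be the time-1 map. Then the Calabi invariant of φ is given by CAL(φ) = 2 ∫₀¹ ∫_{ℝ²} H(t,z) dx dy dt. -/

import Mathlib

open MeasureTheory

noncomputable section

/-- The standard area form `ω₀ = dx ∧ dy` on `ℝ²`, as a bilinear pairing. -/
def omega0 (u v : ℝ × ℝ) : ℝ := u.1 * v.2 - u.2 * v.1

/-- A 1-form on `ℝ²`, encoded as a map into the continuous linear functionals. -/
abbrev OneForm := (ℝ × ℝ) → ((ℝ × ℝ) →L[ℝ] ℝ)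

/-- `l` is a smooth primitive of `ω₀`: a smooth 1-form with `dl = ω₀`. -/
def IsPrimitive (l : OneForm) : Prop :=
  ContDiff ℝ (⊤ : ℕ∞) l ∧ ∀ z u v, fderiv ℝ l z u v - fderiv ℝ l z v u = omega0 u v

/-- Pullback of a 1-form by a map: `(f*l)(z) = l (f z) ∘ Df(z)`. -/
def pullbackForm (f : ℝ × ℝ → ℝ × ℝ) (l : OneForm) : OneForm :=
  fun z => (l (f z)).comp (fderiv ℝ f z)

/-- The group `Diff_c(ℝ², ω₀)` of smooth, compactly supported, area-preserving
diffeomorphisms of the plane. -/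
structure DiffC where
  toFun : ℝ × ℝ → ℝ × ℝ
  invFun : ℝ × ℝ → ℝ × ℝ
  smooth : ContDiff ℝ (⊤ : ℕ∞) toFun
  smooth_inv : ContDiff ℝ (⊤ : ℕ∞) invFun
  left_inv : Function.LeftInverse invFun toFun
  right_inv : Function.RightInverse invFun toFun
  area : ∀ z u v, omega0 (fderiv ℝ toFun z u) (fderiv ℝ toFun z v) = omega0 u v
  compact : ∃ K : Set (ℝ × ℝ), IsCompact K ∧ ∀ z ∉ K, toFun z = z

/-- `σ` is the action of `f` with respect to the primitive `l`: the unique compactly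
supported smooth function with `dσ = f*l − l`. -/
def IsAction (f : ℝ × ℝ → ℝ × ℝ) (l : OneForm) (σ : ℝ × ℝ → ℝ) : Prop :=
  ContDiff ℝ (⊤ : ℕ∞) σ ∧ HasCompactSupport σ ∧
    ∀ z, fderiv ℝ σ z = pullbackForm f l z - l z

/-- The time-dependent Hamiltonian vector field `X_{H_t} = (∂_y H_t, −∂_x H_t)`,
so that `i_{X_{H_t}} ω₀ = dH_t`. -/
def hamVF (H : ℝ → ℝ × ℝ → ℝ) (t : ℝ) (z : ℝ × ℝ) : ℝ × ℝ :=
  (fderiv ℝ (H t) z (0, 1), - fderiv ℝ (H t) z (1, 0))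

open Set Filter Topology
open scoped NNReal

/-!
By Cartan's formula, `d/dt (φ_t^* l) = φ_t^* (L_{X_t} l) = d((l(X_t) + H_t) ∘ φ_t)`, so
`φ_T^* l - l` is the differential of `∫₀ᵀ (l(X_t) + H_t) ∘ φ_t dt`, which by uniqueness of compactly
supported primitives is the action. Since `φ_t` preserves area, its integral over the plane is
`∫₀ᵀ ∫ (l(X_t) + H_t) dz dt`, and `∫ l(X_t) dz = ∫ H_t dz` by integration by parts, hence the
factor `2`. That `φ_t` is differentiable in the initial point, with derivative solving the
variational equation, comes from Gronwall's inequality applied to the difference between the flow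
and the solution of that linear equation.
-/

section LinearODE

variable {E : Type*} [NormedAddCommGroup E] [NormedSpace ℝ E]

/-- The radial retraction of a normed space onto the closed ball of radius `R` around `0`; it
truncates linear vector fields to bounded ones. -/
def radialRetraction (R : ℝ) (x : E) : E := (R / max R ‖x‖) • x

theorem radialRetraction_of_norm_le {R : ℝ} (hR : 0 < R) {x : E} (hx : ‖x‖ ≤ R) :
    radialRetraction R x = x := by
  rw [radialRetraction, max_eq_left hx, div_self hR.ne', one_smul]

theorem norm_radialRetraction_le {R : ℝ} (hR : 0 < R) (x : E) : ‖radialRetraction R x‖ ≤ R := by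
  have hmax : 0 < max R ‖x‖ := lt_max_of_lt_left hR
  rw [radialRetraction, norm_smul, Real.norm_of_nonneg (by positivity), div_mul_eq_mul_div,
    div_le_iff₀ hmax]
  gcongr
  exact le_max_right _ _

theorem norm_radialRetraction_le_norm {R : ℝ} (hR : 0 < R) (x : E) :
    ‖radialRetraction R x‖ ≤ ‖x‖ := by
  have hmax : 0 < max R ‖x‖ := lt_max_of_lt_left hR
  rw [radialRetraction, norm_smul, Real.norm_of_nonneg (by positivity)]
  exact mul_le_of_le_one_left (norm_nonneg x) ((div_le_one hmax).2 (le_max_left _ _))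

theorem lipschitzWith_radialRetraction {R : ℝ} (hR : 0 < R) :
    LipschitzWith 2 (radialRetraction R : E → E) := by
  refine LipschitzWith.of_dist_le_mul fun x y => ?_
  set m := max R ‖x‖
  set n := max R ‖y‖
  have hm : 0 < m := lt_max_of_lt_left hR
  have hn : 0 < n := lt_max_of_lt_left hR
  have hmn : |n - m| ≤ ‖x - y‖ := by
    rw [abs_sub_comm]
    exact (abs_max_sub_max_le_max R ‖x‖ R ‖y‖).trans
      (by simpa using abs_norm_sub_norm_le x y)
  have hsplit : radialRetraction R x - radialRetraction R y
      = (R / m) • (x - y) + (R / m * ((n - m) / n)) • y := by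
    have hcoeff : R / m * ((n - m) / n) = R / m - R / n := by field_simp
    rw [hcoeff, radialRetraction, radialRetraction]
    module
  rw [dist_eq_norm, dist_eq_norm, hsplit]
  calc ‖(R / m) • (x - y) + (R / m * ((n - m) / n)) • y‖
      ≤ R / m * ‖x - y‖ + R / m * (|n - m| / n) * ‖y‖ := by
        refine (norm_add_le _ _).trans_eq ?_
        simp only [norm_smul, norm_mul, norm_div, Real.norm_eq_abs, abs_of_pos hR, abs_of_pos hm,
          abs_of_pos hn]
    _ = R / m * ‖x - y‖ + R / m * (‖y‖ / n) * |n - m| := by ring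
    _ ≤ 1 * ‖x - y‖ + 1 * 1 * ‖x - y‖ := by
        have hRm : R / m ≤ 1 := (div_le_one hm).2 (le_max_left _ _)
        have hyn : ‖y‖ / n ≤ 1 := (div_le_one hn).2 (le_max_right _ _)
        gcongr
    _ = (2 : ℝ≥0) * ‖x - y‖ := by push_cast; ring

theorem norm_le_mul_exp_of_norm_deriv_le {w w' : ℝ → E} {M T : ℝ}
    (hw : ∀ t ∈ Icc 0 T, HasDerivWithinAt w (w' t) (Icc 0 T) t)
    (hw' : ∀ t ∈ Icc 0 T, ‖w' t‖ ≤ M * ‖w t‖) {t : ℝ} (ht : t ∈ Icc 0 T) :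
    ‖w t‖ ≤ ‖w 0‖ * Real.exp (M * t) := by
  have hgronwall := norm_le_gronwallBound_of_norm_deriv_right_le (δ := ‖w 0‖) (K := M) (ε := 0)
    (fun s hs => (hw s hs).continuousWithinAt)
    (fun s hs => (hw s (Ico_subset_Icc_self hs)).mono_of_mem_nhdsWithin
      (Icc_mem_nhdsGE_of_mem hs))
    le_rfl (fun s hs => (hw' s (Ico_subset_Icc_self hs)).trans_eq (add_zero _).symm) t ht
  rwa [gronwallBound_ε0, sub_zero] at hgronwall

theorem exists_hasDerivWithinAt_linearODE [CompleteSpace E] {B : ℝ → E →L[ℝ] E} {T : ℝ}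
    (hT : 0 ≤ T) (hB : ContinuousOn B (Icc 0 T)) (u : E) :
    ∃ w : ℝ → E, w 0 = u ∧ ∀ t ∈ Icc 0 T, HasDerivWithinAt w (B t (w t)) (Icc 0 T) t := by
  obtain ⟨M, hM0, hM⟩ : ∃ M : ℝ, 0 ≤ M ∧ ∀ t ∈ Icc 0 T, ‖B t‖ ≤ M := by
    obtain ⟨M, hM⟩ := isCompact_Icc.exists_bound_of_continuousOn hB
    exact ⟨M, (norm_nonneg _).trans (hM 0 (left_mem_Icc.2 hT)), hM⟩
  lift M to ℝ≥0 using hM0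
  lift T to ℝ≥0 using hT
  -- Solutions of the truncated equation obey the same Gronwall bound as those of the linear one,
  -- so they never leave the ball of radius `R`, where the two equations agree.
  obtain ⟨R, hR, hRu⟩ : ∃ R : ℝ≥0, (0 : ℝ) < R ∧ ‖u‖ * Real.exp (M * T) ≤ R :=
    ⟨⟨‖u‖ * Real.exp (M * T) + 1, by positivity⟩, lt_add_of_nonneg_of_lt (by positivity) one_pos,
      le_add_of_nonneg_right zero_le_one⟩
  have hPL : IsPicardLindelof (fun t x => B t (radialRetraction R x)) (tmin := 0) (tmax := T)
      ⟨0, left_mem_Icc.2 T.2⟩ u (M * R * T) 0 (M * R) (M * 2) :=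
    { lipschitzOnWith := fun t ht =>
        (((B t).lipschitz.weaken (hM t ht)).comp
          (lipschitzWith_radialRetraction hR)).lipschitzOnWith
      continuousOn := fun x _ => hB.clm_apply continuousOn_const
      norm_le := fun t ht x _ =>
        (B t).le_of_opNorm_le_of_le (hM t ht) (norm_radialRetraction_le hR x)
      mul_max_le := by simp }
  obtain ⟨w, hw0, hw⟩ := hPL.exists_eq_forall_mem_Icc_hasDerivWithinAt₀
  refine ⟨w, hw0, fun t ht => ?_⟩
  have hw_le : ‖w t‖ ≤ R :=
    calc ‖w t‖ ≤ ‖w 0‖ * Real.exp (M * t) :=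
          norm_le_mul_exp_of_norm_deriv_le hw (fun s hs =>
            (B s).le_of_opNorm_le_of_le (hM s hs) (norm_radialRetraction_le_norm hR _)) ht
      _ ≤ ‖u‖ * Real.exp (M * T) := by
          rw [hw0]
          gcongr
          exact ht.2
      _ ≤ R := hRu
  simpa only [radialRetraction_of_norm_le hR hw_le] using hw t ht

end LinearODE

section Flow

variable {E : Type*} [NormedAddCommGroup E] [NormedSpace ℝ E]
  {V : ℝ → E → E} {φ : ℝ → E → E} {M : ℝ≥0}

/-- `φ` is the flow, started at time `0`, of the time-dependent vector field `V`. -/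
structure IsFlow (V : ℝ → E → E) (φ : ℝ → E → E) : Prop where
  map_zero (z : E) : φ 0 z = z
  hasDerivAt (t : ℝ) (z : E) : HasDerivAt (fun s => φ s z) (V t (φ t z)) t

namespace IsFlow

theorem continuous_time (hφ : IsFlow V φ) (z : E) : Continuous fun t => φ t z :=
  continuous_iff_continuousAt.2 fun t => (hφ.hasDerivAt t z).continuousAt

theorem reverse (hφ : IsFlow V φ) : IsFlow (fun t z => -V (-t) z) fun t => φ (-t) where
  map_zero z := by rw [neg_zero, hφ.map_zero]
  hasDerivAt t z := by
    simpa [Function.comp_def] using (hφ.hasDerivAt (-t) z).scomp t (hasDerivAt_neg t)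

theorem injective (hφ : IsFlow V φ) (hV : ∀ t, LipschitzWith M (V t)) (t : ℝ) :
    Function.Injective (φ t) := fun x y hxy => by
  have hxy' : (fun s => φ s x) = fun s => φ s y :=
    ODE_solution_unique_univ (s := fun _ => univ) (fun s => (hV s).lipschitzOnWith)
      (fun s => ⟨hφ.hasDerivAt s x, mem_univ _⟩) (fun s => ⟨hφ.hasDerivAt s y, mem_univ _⟩) hxy
  simpa only [hφ.map_zero] using congrFun hxy' 0

theorem eq_self_of_forall_eq_zero (hφ : IsFlow V φ) (hV : ∀ t, LipschitzWith M (V t)) {z : E}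
    (hz : ∀ t, V t z = 0) (t : ℝ) : φ t z = z := by
  have hconst : (fun s => φ s z) = fun _ => z :=
    ODE_solution_unique_univ (s := fun _ => univ) (fun s => (hV s).lipschitzOnWith)
      (fun s => ⟨hφ.hasDerivAt s z, mem_univ _⟩)
      (fun s => ⟨(hz s).symm ▸ hasDerivAt_const s z, mem_univ _⟩) (hφ.map_zero z)
  exact congrFun hconst t

theorem dist_le_of_nonneg (hφ : IsFlow V φ) (hV : ∀ t, LipschitzWith M (V t)) {t : ℝ} (ht : 0 ≤ t)
    (x y : E) : dist (φ t x) (φ t y) ≤ Real.exp (M * t) * dist x y := by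
  have hxy := dist_le_of_trajectories_ODE (a := 0) (b := t) (δ := dist x y) hV
    (hφ.continuous_time x).continuousOn (fun s _ => (hφ.hasDerivAt s x).hasDerivWithinAt)
    (hφ.continuous_time y).continuousOn (fun s _ => (hφ.hasDerivAt s y).hasDerivWithinAt)
    (by rw [hφ.map_zero, hφ.map_zero]) t (right_mem_Icc.2 ht)
  rwa [sub_zero, mul_comm] at hxy

theorem lipschitzWith (hφ : IsFlow V φ) (hV : ∀ t, LipschitzWith M (V t)) (t : ℝ) :
    LipschitzWith (Real.exp (M * |t|)).toNNReal (φ t) := by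
  refine LipschitzWith.of_dist_le' fun x y => ?_
  rcases le_total 0 t with ht | ht
  · rw [abs_of_nonneg ht]
    exact hφ.dist_le_of_nonneg hV ht x y
  · rw [abs_of_nonpos ht]
    simpa only [neg_neg] using
      hφ.reverse.dist_le_of_nonneg (fun s => (hV (-s)).neg) (neg_nonneg.2 ht) x y

theorem norm_fderiv_le (hφ : IsFlow V φ) (hV : ∀ t, LipschitzWith M (V t)) (t : ℝ) (z : E) :
    ‖fderiv ℝ (φ t) z‖ ≤ Real.exp (M * |t|) :=
  (norm_fderiv_le_of_lipschitz ℝ (hφ.lipschitzWith hV t)).trans_eq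
    (Real.coe_toNNReal _ (Real.exp_pos _).le)

theorem continuous_uncurry (hφ : IsFlow V φ) (hV : ∀ t, LipschitzWith M (V t)) :
    Continuous (Function.uncurry φ) := by
  refine continuous_iff_continuousAt.2 fun ⟨t, z⟩ => ?_
  obtain ⟨T, hT⟩ := exists_gt |t|
  have hcont : ContinuousOn (Function.uncurry φ) (Icc (-T) T ×ˢ univ) := by
    refine continuousOn_prod_of_continuousOn_lipschitzOnWith' _ (Real.exp (M * T)).toNNReal
      (fun s hs => ((hφ.lipschitzWith hV s).weaken ?_).lipschitzOnWith)
      (fun z _ => (hφ.continuous_time z).continuousOn)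
    gcongr
    exact abs_le.2 hs
  obtain ⟨htl, htr⟩ := abs_lt.1 hT
  exact hcont.continuousAt (prod_mem_nhds (Icc_mem_nhds htl htr) univ_mem)

end IsFlow

end Flow

section Variational

variable {P E F : Type*} [PseudoMetricSpace P] [NormedAddCommGroup E] [NormedSpace ℝ E]
  [NormedAddCommGroup F] [NormedSpace ℝ F]

theorem exists_forall_norm_sub_sub_fderiv_apply_le {V : P → E → F}
    (hVd : ∀ p, Differentiable ℝ (V p)) (hVc : Continuous fun q : P × E => fderiv ℝ (V q.1) q.2)
    {γ : P → E} {s : Set P} (hs : IsCompact s) (hγ : ContinuousOn γ s) {ε : ℝ} (hε : 0 < ε) :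
    ∃ δ > 0, ∀ p ∈ s, ∀ y, dist y (γ p) < δ →
      ‖V p y - V p (γ p) - fderiv ℝ (V p) (γ p) (y - γ p)‖ ≤ ε * ‖y - γ p‖ := by
  have hgraph : IsCompact ((fun p => (p, γ p)) '' s) := hs.image_of_continuousOn (by fun_prop)
  obtain ⟨δ, hδ, hclose⟩ := Metric.mem_uniformity_dist.1 <|
    hgraph.uniformContinuousAt_of_continuousAt _ (fun q _ => hVc.continuousAt)
      (Metric.dist_mem_uniformity hε)
  refine ⟨δ, hδ, fun p hp y hy => ?_⟩
  refine Convex.norm_image_sub_le_of_norm_fderiv_le' (s := Metric.ball (γ p) δ)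
    (fun x _ => hVd p x) (fun x hx => ?_) (convex_ball _ _) (Metric.mem_ball_self hδ) hy
  have hx' : dist (p, γ p) (p, x) < δ := by
    simpa [Prod.dist_eq, hδ, dist_comm] using hx
  rw [← dist_eq_norm, dist_comm]
  exact (hclose hx' ⟨p, hp, rfl⟩ : dist _ _ < ε).le

theorem gronwallBound_zero_eq_mul (K ε x : ℝ) :
    gronwallBound 0 K ε x = ε * gronwallBound 0 K 1 x := by
  rcases eq_or_ne K 0 with rfl | hK
  · simp only [gronwallBound_K0]
    ring
  · simp only [gronwallBound_of_K_ne_0 hK]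
    ring

variable {V : ℝ → E → E} {φ : ℝ → E → E} {M : ℝ≥0} {A : ℝ → E →L[ℝ] E} {z : E} {T : ℝ}

namespace IsFlow

theorem norm_sub_sub_apply_le (hφ : IsFlow V φ) (hV : ∀ t, LipschitzWith M (V t))
    (hA0 : A 0 = ContinuousLinearMap.id ℝ E)
    (hA : ∀ t ∈ Icc 0 T, HasDerivWithinAt A ((fderiv ℝ (V t) (φ t z)).comp (A t)) (Icc 0 T) t)
    {ε δ : ℝ} (hε : 0 ≤ ε) (hδ : ∀ t ∈ Icc 0 T, ∀ y, dist y (φ t z) < δ →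
      ‖V t y - V t (φ t z) - fderiv ℝ (V t) (φ t z) (y - φ t z)‖ ≤ ε * ‖y - φ t z‖)
    {y : E} (hy : Real.exp (M * T) * dist y z < δ) {t : ℝ} (ht : t ∈ Icc 0 T) :
    ‖φ t y - φ t z - A t (y - z)‖
      ≤ gronwallBound 0 M (ε * (Real.exp (M * T) * dist y z)) t := by
  have hdist : ∀ s ∈ Icc 0 T, dist (φ s y) (φ s z) ≤ Real.exp (M * T) * dist y z := by
    intro s hs
    refine (hφ.dist_le_of_nonneg hV hs.1 y z).trans ?_
    gcongr
    exact hs.2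
  have hAy : ∀ s ∈ Icc 0 T, HasDerivWithinAt (fun s => A s (y - z))
      (fderiv ℝ (V s) (φ s z) (A s (y - z))) (Icc 0 T) s := fun s hs => by
    simpa using (hA s hs).clm_apply (hasDerivWithinAt_const s _ (y - z))
  have hgronwall := norm_le_gronwallBound_of_norm_deriv_right_le (δ := 0) (K := M)
    (ε := ε * (Real.exp (M * T) * dist y z)) (f := fun s => φ s y - φ s z - A s (y - z))
    (((hφ.continuous_time y).sub (hφ.continuous_time z)).continuousOn.sub
      fun s hs => (hAy s hs).continuousWithinAt)
    (fun s hs => ((hφ.hasDerivAt s y).sub (hφ.hasDerivAt s z)).hasDerivWithinAt.sub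
      ((hAy s (Ico_subset_Icc_self hs)).mono_of_mem_nhdsWithin (Icc_mem_nhdsGE_of_mem hs)))
    (by simp [hφ.map_zero, hA0]) ?_ t ht
  · rwa [sub_zero] at hgronwall
  intro s hs
  replace hs := Ico_subset_Icc_self hs
  set D := fderiv ℝ (V s) (φ s z)
  calc ‖V s (φ s y) - V s (φ s z) - D (A s (y - z))‖
      = ‖D (φ s y - φ s z - A s (y - z))
          + (V s (φ s y) - V s (φ s z) - D (φ s y - φ s z))‖ := by
        congr 1
        simp only [map_sub]
        abel
    _ ≤ M * ‖φ s y - φ s z - A s (y - z)‖ + ε * ‖φ s y - φ s z‖ :=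
        norm_add_le_of_le (D.le_of_opNorm_le (norm_fderiv_le_of_lipschitz ℝ (hV s)) _)
          (hδ s hs _ ((hdist s hs).trans_lt hy))
    _ ≤ M * ‖φ s y - φ s z - A s (y - z)‖ + ε * (Real.exp (M * T) * dist y z) := by
        gcongr
        rw [← dist_eq_norm]
        exact hdist s hs

theorem hasFDerivAt_of_variational (hφ : IsFlow V φ) (hV : ∀ t, LipschitzWith M (V t))
    (hVd : ∀ t, Differentiable ℝ (V t)) (hVc : Continuous fun p : ℝ × E => fderiv ℝ (V p.1) p.2)
    (hA0 : A 0 = ContinuousLinearMap.id ℝ E)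
    (hA : ∀ t ∈ Icc 0 T, HasDerivWithinAt A ((fderiv ℝ (V t) (φ t z)).comp (A t)) (Icc 0 T) t)
    {t : ℝ} (ht : t ∈ Icc 0 T) : HasFDerivAt (φ t) (A t) z := by
  refine HasFDerivAt.of_isLittleO (Asymptotics.isLittleO_iff.2 fun c hc => ?_)
  set C := Real.exp (M * T) * (|gronwallBound 0 M 1 t| + 1)
  have hC : 0 < C := by positivity
  obtain ⟨δ, hδ, hV_close⟩ := exists_forall_norm_sub_sub_fderiv_apply_le hVd hVc isCompact_Icc
    (hφ.continuous_time z).continuousOn (div_pos hc hC)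
  have hnear : ∀ᶠ y in 𝓝 z, Real.exp (M * T) * dist y z < δ := by
    have hcont : ContinuousAt (fun y => Real.exp (M * T) * dist y z) z := by fun_prop
    exact hcont.eventually_lt_const (by simpa using hδ)
  filter_upwards [hnear] with y hy
  calc ‖φ t y - φ t z - A t (y - z)‖
      ≤ gronwallBound 0 M (c / C * (Real.exp (M * T) * dist y z)) t :=
        hφ.norm_sub_sub_apply_le hV hA0 hA (div_pos hc hC).le hV_close hy ht
    _ = c / C * (Real.exp (M * T) * dist y z) * gronwallBound 0 M 1 t :=
        gronwallBound_zero_eq_mul _ _ _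
    _ ≤ c / C * (Real.exp (M * T) * dist y z) * (|gronwallBound 0 M 1 t| + 1) := by
        gcongr
        exact (le_abs_self _).trans (le_add_of_nonneg_right zero_le_one)
    _ = c / C * C * dist y z := by ring
    _ = c * ‖y - z‖ := by rw [div_mul_cancel₀ _ hC.ne', dist_eq_norm]

variable [CompleteSpace E]

theorem differentiableAt_and_hasDerivWithinAt_fderiv (hφ : IsFlow V φ)
    (hV : ∀ t, LipschitzWith M (V t)) (hVd : ∀ t, Differentiable ℝ (V t))
    (hVc : Continuous fun p : ℝ × E => fderiv ℝ (V p.1) p.2) (z : E) {t : ℝ} (ht : 0 ≤ t) :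
    DifferentiableAt ℝ (φ t) z ∧ HasDerivWithinAt (fun s => fderiv ℝ (φ s) z)
      ((fderiv ℝ (V t) (φ t z)).comp (fderiv ℝ (φ t) z)) (Ici 0) t := by
  have hD : Continuous fun s => fderiv ℝ (V s) (φ s z) :=
    hVc.comp (continuous_id.prodMk (hφ.continuous_time z))
  obtain ⟨A, hA0, hA⟩ := exists_hasDerivWithinAt_linearODE (T := t + 1) (by positivity)
    ((ContinuousLinearMap.compL ℝ E E E).continuous.comp hD).continuousOn
    (ContinuousLinearMap.id ℝ E)
  have hAd : ∀ s ∈ Icc 0 (t + 1), HasFDerivAt (φ s) (A s) z := fun s hs =>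
    hφ.hasFDerivAt_of_variational hV hVd hVc hA0 hA hs
  have ht' : t ∈ Icc 0 (t + 1) := ⟨ht, by linarith⟩
  have hnhds : Icc 0 (t + 1) ∈ 𝓝[Ici 0] t :=
    mem_of_superset (inter_mem_nhdsWithin _ (Iio_mem_nhds (lt_add_one t)))
      fun s hs => ⟨hs.1, hs.2.le⟩
  refine ⟨(hAd t ht').differentiableAt, ?_⟩
  rw [(hAd t ht').fderiv]
  exact ((hA t ht').congr (fun s hs => (hAd s hs).fderiv)
    (hAd t ht').fderiv).mono_of_mem_nhdsWithin hnhds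

theorem differentiableAt_and_hasDerivWithinAt_fderiv_of_nonpos (hφ : IsFlow V φ)
    (hV : ∀ t, LipschitzWith M (V t)) (hVd : ∀ t, Differentiable ℝ (V t))
    (hVc : Continuous fun p : ℝ × E => fderiv ℝ (V p.1) p.2) (z : E) {t : ℝ} (ht : t ≤ 0) :
    DifferentiableAt ℝ (φ t) z ∧ HasDerivWithinAt (fun s => fderiv ℝ (φ s) z)
      ((fderiv ℝ (V t) (φ t z)).comp (fderiv ℝ (φ t) z)) (Iic 0) t := by
  have hVc' : Continuous fun p : ℝ × E => fderiv ℝ (fun y => -V (-p.1) y) p.2 := by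
    simp only [fderiv_fun_neg]
    exact (hVc.comp (continuous_fst.neg.prodMk continuous_snd)).neg
  obtain ⟨hdiff, hderiv⟩ := hφ.reverse.differentiableAt_and_hasDerivWithinAt_fderiv
    (fun s => (hV (-s)).neg) (fun s => (hVd (-s)).neg) hVc' z (neg_nonneg.2 ht)
  rw [neg_neg] at hdiff
  have hneg : MapsTo Neg.neg (Iic (0 : ℝ)) (Ici 0) := fun s hs => mem_Ici.2 (neg_nonneg.2 hs)
  refine ⟨hdiff, ?_⟩
  simpa [Function.comp_def] using hderiv.scomp t (hasDerivAt_neg t).hasDerivWithinAt hneg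

theorem differentiable (hφ : IsFlow V φ) (hV : ∀ t, LipschitzWith M (V t))
    (hVd : ∀ t, Differentiable ℝ (V t)) (hVc : Continuous fun p : ℝ × E => fderiv ℝ (V p.1) p.2)
    (t : ℝ) : Differentiable ℝ (φ t) := fun z =>
  (le_total 0 t).elim
    (fun ht => (hφ.differentiableAt_and_hasDerivWithinAt_fderiv hV hVd hVc z ht).1)
    (fun ht => (hφ.differentiableAt_and_hasDerivWithinAt_fderiv_of_nonpos hV hVd hVc z ht).1)

theorem hasDerivAt_fderiv (hφ : IsFlow V φ) (hV : ∀ t, LipschitzWith M (V t))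
    (hVd : ∀ t, Differentiable ℝ (V t)) (hVc : Continuous fun p : ℝ × E => fderiv ℝ (V p.1) p.2)
    (t : ℝ) (z : E) : HasDerivAt (fun s => fderiv ℝ (φ s) z)
      ((fderiv ℝ (V t) (φ t z)).comp (fderiv ℝ (φ t) z)) t := by
  have hright := fun ht =>
    (hφ.differentiableAt_and_hasDerivWithinAt_fderiv hV hVd hVc z (t := t) ht).2
  have hleft := fun ht =>
    (hφ.differentiableAt_and_hasDerivWithinAt_fderiv_of_nonpos hV hVd hVc z (t := t) ht).2
  rcases lt_trichotomy t 0 with ht | rfl | ht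
  · exact (hleft ht.le).hasDerivAt (Iic_mem_nhds ht)
  · simpa only [Iic_union_Ici, hasDerivWithinAt_univ] using (hleft le_rfl).union (hright le_rfl)
  · exact (hright ht.le).hasDerivAt (Ici_mem_nhds ht)

end IsFlow

end Variational

section LieDerivative

variable {E F : Type*} [NormedAddCommGroup E] [NormedSpace ℝ E] [CompleteSpace E]
  [NormedAddCommGroup F] [NormedSpace ℝ F] {V : ℝ → E → E} {φ : ℝ → E → E} {M : ℝ≥0}

/-- The Lie derivative `L_X l` of a 1-form `l` with values in `F` along a vector field `X`, written
in the linear structure of `E` rather than through exterior derivatives. -/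
def lieDerivative (X : E → E) (l : E → E →L[ℝ] F) (z : E) : E →L[ℝ] F :=
  fderiv ℝ l z (X z) + (l z).comp (fderiv ℝ X z)

namespace IsFlow

theorem hasDerivAt_pullback (hφ : IsFlow V φ) (hV : ∀ t, LipschitzWith M (V t))
    (hVd : ∀ t, Differentiable ℝ (V t)) (hVc : Continuous fun p : ℝ × E => fderiv ℝ (V p.1) p.2)
    {l : E → E →L[ℝ] F} (hl : Differentiable ℝ l) (t : ℝ) (z : E) :
    HasDerivAt (fun s => (l (φ s z)).comp (fderiv ℝ (φ s) z))
      ((lieDerivative (V t) l (φ t z)).comp (fderiv ℝ (φ t) z)) t := by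
  have hlφ := (hl (φ t z)).hasFDerivAt.comp_hasDerivAt t (hφ.hasDerivAt t z)
  rw [lieDerivative, ContinuousLinearMap.add_comp, ContinuousLinearMap.comp_assoc]
  exact hlφ.clm_comp (hφ.hasDerivAt_fderiv hV hVd hVc t z)

theorem continuous_fderiv_comp_fderiv (hφ : IsFlow V φ) (hV : ∀ t, LipschitzWith M (V t))
    (hVd : ∀ t, Differentiable ℝ (V t)) (hVc : Continuous fun p : ℝ × E => fderiv ℝ (V p.1) p.2)
    {G : ℝ → E → F} (hGc : Continuous fun p : ℝ × E => fderiv ℝ (G p.1) p.2) (z : E) :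
    Continuous fun t => (fderiv ℝ (G t) (φ t z)).comp (fderiv ℝ (φ t) z) :=
  (hGc.comp (continuous_id.prodMk (hφ.continuous_time z))).clm_comp <|
    continuous_iff_continuousAt.2 fun t => (hφ.hasDerivAt_fderiv hV hVd hVc t z).continuousAt

theorem hasFDerivAt_integral_comp (hφ : IsFlow V φ) (hV : ∀ t, LipschitzWith M (V t))
    (hVd : ∀ t, Differentiable ℝ (V t)) (hVc : Continuous fun p : ℝ × E => fderiv ℝ (V p.1) p.2)
    {G : ℝ → E → F} {N : ℝ≥0} (hG : Continuous (Function.uncurry G))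
    (hGN : ∀ t, LipschitzWith N (G t)) (hGd : ∀ t, Differentiable ℝ (G t))
    (hGc : Continuous fun p : ℝ × E => fderiv ℝ (G p.1) p.2) (a b : ℝ) (z : E) :
    HasFDerivAt (fun y => ∫ t in a..b, G t (φ t y))
      (∫ t in a..b, (fderiv ℝ (G t) (φ t z)).comp (fderiv ℝ (φ t) z)) z := by
  have hGφ : ∀ y, Continuous fun t => G t (φ t y) := fun y =>
    hG.comp (continuous_id.prodMk (hφ.continuous_time y))
  refine intervalIntegral.hasFDerivAt_integral_of_dominated_of_fderiv_le (s := univ)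
    (F := fun y t => G t (φ t y))
    (F' := fun y t => (fderiv ℝ (G t) (φ t y)).comp (fderiv ℝ (φ t) y))
    (bound := fun t => N * Real.exp (M * |t|)) univ_mem
    (Eventually.of_forall fun y => (hGφ y).aestronglyMeasurable)
    ((hGφ z).intervalIntegrable a b)
    (hφ.continuous_fderiv_comp_fderiv hV hVd hVc hGc z).aestronglyMeasurable
    (Eventually.of_forall fun t _ y _ => ?_)
    (Continuous.intervalIntegrable (by fun_prop) a b)
    (Eventually.of_forall fun t _ y _ =>
      (hGd t _).hasFDerivAt.comp y (hφ.differentiable hV hVd hVc t y).hasFDerivAt)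
  refine (ContinuousLinearMap.opNorm_comp_le _ _).trans ?_
  gcongr
  · exact norm_fderiv_le_of_lipschitz ℝ (hGN t)
  · exact hφ.norm_fderiv_le hV t y

theorem hasFDerivAt_integral_comp_of_lieDerivative_eq [CompleteSpace F] (hφ : IsFlow V φ)
    (hV : ∀ t, LipschitzWith M (V t)) (hVd : ∀ t, Differentiable ℝ (V t))
    (hVc : Continuous fun p : ℝ × E => fderiv ℝ (V p.1) p.2)
    {G : ℝ → E → F} {N : ℝ≥0} (hG : Continuous (Function.uncurry G))
    (hGN : ∀ t, LipschitzWith N (G t)) (hGd : ∀ t, Differentiable ℝ (G t))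
    (hGc : Continuous fun p : ℝ × E => fderiv ℝ (G p.1) p.2)
    {l : E → E →L[ℝ] F} (hl : Differentiable ℝ l)
    (hlG : ∀ t z, lieDerivative (V t) l z = fderiv ℝ (G t) z) (a b : ℝ) (z : E) :
    HasFDerivAt (fun y => ∫ t in a..b, G t (φ t y))
      ((l (φ b z)).comp (fderiv ℝ (φ b) z) - (l (φ a z)).comp (fderiv ℝ (φ a) z)) z := by
  have hFTC := intervalIntegral.integral_eq_sub_of_hasDerivAt (a := a) (b := b)
    (fun t _ => hlG t (φ t z) ▸ hφ.hasDerivAt_pullback hV hVd hVc hl t z)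
    ((hφ.continuous_fderiv_comp_fderiv hV hVd hVc hGc z).intervalIntegrable a b)
  exact hFTC ▸ hφ.hasFDerivAt_integral_comp hV hVd hVc hG hGN hGd hGc a b z

end IsFlow

end LieDerivative

section CompactSupport

section Topological

variable {P E F : Type*} [TopologicalSpace P] [TopologicalSpace E] [Zero F] {f : P → E → F}

theorem exists_isCompact_forall_slice_eq_zero (hf : HasCompactSupport (Function.uncurry f)) :
    ∃ K : Set E, IsCompact K ∧ ∀ p, ∀ z ∉ K, f p z = 0 :=
  ⟨Prod.snd '' tsupport (Function.uncurry f), hf.isCompact.image continuous_snd, fun p z hz =>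
    image_eq_zero_of_notMem_tsupport (f := Function.uncurry f) (x := (p, z))
      fun hpz => hz ⟨_, hpz, rfl⟩⟩

theorem hasCompactSupport_slice [R1Space E] (hf : HasCompactSupport (Function.uncurry f)) (p : P) :
    HasCompactSupport (f p) := by
  obtain ⟨K, hK, hfK⟩ := exists_isCompact_forall_slice_eq_zero hf
  exact HasCompactSupport.intro hK (hfK p)

end Topological

theorem hasCompactSupport_intervalIntegral {E F : Type*} [TopologicalSpace E] [R1Space E]
    [NormedAddCommGroup F] [NormedSpace ℝ F] {f : ℝ → E → F}
    (hf : HasCompactSupport (Function.uncurry f)) (a b : ℝ) :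
    HasCompactSupport fun z => ∫ t in a..b, f t z := by
  obtain ⟨K, hK, hfK⟩ := exists_isCompact_forall_slice_eq_zero hf
  exact HasCompactSupport.intro hK fun z hz => by simp [hfK _ z hz]

variable {P E F : Type*} [NormedAddCommGroup E] [NormedSpace ℝ E]

theorem IsFlow.hasCompactSupport_comp [Zero F] {V : ℝ → E → E} {φ : ℝ → E → E} {M : ℝ≥0}
    (hφ : IsFlow V φ) (hV : ∀ t, LipschitzWith M (V t))
    (hVc : HasCompactSupport (Function.uncurry V)) {G : ℝ → E → F}
    (hG : HasCompactSupport (Function.uncurry G)) :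
    HasCompactSupport (Function.uncurry fun t z => G t (φ t z)) := by
  obtain ⟨K, hK, hVK⟩ := exists_isCompact_forall_slice_eq_zero hVc
  have hzero : ∀ t z, (t, z) ∉ tsupport (Function.uncurry G) → G t z = 0 := fun t z =>
    image_eq_zero_of_notMem_tsupport (f := Function.uncurry G)
  refine HasCompactSupport.intro (hG.isCompact.union
    ((hG.isCompact.image continuous_fst).prod hK)) fun ⟨t, z⟩ htz => ?_
  rw [mem_union, not_or] at htz
  by_cases hz : z ∈ K
  · exact hzero t _ fun ht => htz.2 ⟨⟨_, ht, rfl⟩, hz⟩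
  · rw [Function.uncurry_apply_pair, hφ.eq_self_of_forall_eq_zero hV fun s => hVK s z hz]
    exact hzero t z htz.1

variable [NormedAddCommGroup F] [NormedSpace ℝ F] {f : P → E → F}

theorem hasCompactSupport_clm_apply {α : Type*} [TopologicalSpace α] (l : α → E →L[ℝ] F)
    {X : α → E} (hX : HasCompactSupport X) : HasCompactSupport fun a => l a (X a) :=
  hX.mono fun a => mt fun ha => (congrArg (l a) ha).trans (map_zero (l a))

theorem hasCompactSupport_fderiv_slice [TopologicalSpace P]
    (hf : HasCompactSupport (Function.uncurry f)) :
    HasCompactSupport fun p : P × E => fderiv ℝ (f p.1) p.2 := by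
  refine hf.mono' fun ⟨p, z⟩ => not_imp_not.1 fun hpz => ?_
  have hzero : f p =ᶠ[𝓝 z] fun _ => 0 :=
    (Continuous.prodMk_right p).tendsto z (notMem_tsupport_iff_eventuallyEq.1 hpz)
  simp [hzero.fderiv_eq]

theorem contDiff_slice [NormedAddCommGroup P] [NormedSpace ℝ P] {n : WithTop ℕ∞}
    (hf : ContDiff ℝ n (Function.uncurry f)) (p : P) : ContDiff ℝ n (f p) :=
  hf.comp (contDiff_const.prodMk contDiff_id)

theorem contDiff_fderiv_slice [NormedAddCommGroup P] [NormedSpace ℝ P] {m n : WithTop ℕ∞}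
    (hf : ContDiff ℝ n (Function.uncurry f)) (hmn : m + 1 ≤ n) :
    ContDiff ℝ m fun p : P × E => fderiv ℝ (f p.1) p.2 :=
  ContDiff.fderiv (f := fun p : P × E => f p.1)
    (hf.comp ((contDiff_fst.comp contDiff_fst).prodMk contDiff_snd)) contDiff_snd hmn

theorem continuous_fderiv_slice [NormedAddCommGroup P] [NormedSpace ℝ P]
    (hf : ContDiff ℝ 1 (Function.uncurry f)) :
    Continuous fun p : P × E => fderiv ℝ (f p.1) p.2 :=
  (contDiff_fderiv_slice (m := 0) hf (zero_add 1).le).continuous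

theorem exists_forall_lipschitzWith_slice [NormedAddCommGroup P] [NormedSpace ℝ P]
    (hf : ContDiff ℝ 1 (Function.uncurry f)) (hfc : HasCompactSupport (Function.uncurry f)) :
    ∃ C : ℝ≥0, ∀ p, LipschitzWith C (f p) := by
  obtain ⟨C, hC⟩ := hf.lipschitzWith_of_hasCompactSupport hfc one_ne_zero
  refine ⟨C, fun p => ?_⟩
  simpa [Function.comp_def] using hC.comp (LipschitzWith.prodMk_left p)

theorem eq_of_fderiv_eq_of_hasCompactSupport [NoncompactSpace E] {f g : E → F}
    (hf : Differentiable ℝ f) (hg : Differentiable ℝ g) (hfc : HasCompactSupport f)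
    (hgc : HasCompactSupport g) (hfg : ∀ z, fderiv ℝ f z = fderiv ℝ g z) : f = g := by
  obtain ⟨z₀, hz₀⟩ := (ne_univ_iff_exists_notMem _).1 (hfc.isCompact.union hgc.isCompact).ne_univ
  rw [mem_union, not_or] at hz₀
  refine eq_of_fderiv_eq hf hg hfg z₀ ?_
  rw [image_eq_zero_of_notMem_tsupport hz₀.1, image_eq_zero_of_notMem_tsupport hz₀.2]

end CompactSupport

section Measure

theorem measurePreserving_of_abs_det_fderiv_eq_one {E : Type*} [NormedAddCommGroup E]
    [NormedSpace ℝ E] [FiniteDimensional ℝ E] [MeasurableSpace E] [BorelSpace E] (μ : Measure E)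
    [μ.IsAddHaarMeasure] {f : E → E} (hf : Differentiable ℝ f) (hinj : Function.Injective f)
    (hdet : ∀ z, |(fderiv ℝ f z).det| = 1) {K : Set E} (hK : IsCompact K)
    (hfK : ∀ z ∉ K, f z = z) : MeasurePreserving f μ μ := by
  have himage : f '' K ⊆ K := by
    rintro _ ⟨z, hz, rfl⟩
    by_contra hfz
    exact hfz (by rwa [hinj (hfK _ hfz)])
  have hvol : μ (f '' K) = μ K := by
    rw [← lintegral_abs_det_fderiv_eq_addHaar_image μ hK.measurableSet
      (fun z _ => (hf z).hasFDerivAt.hasFDerivWithinAt) hinj.injOn]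
    simp [hdet]
  have hrange : (range f)ᶜ ⊆ K \ f '' K := fun z hz =>
    ⟨by_contra fun hzK => hz ⟨z, hfK z hzK⟩, fun hzf => hz (image_subset_range f K hzf)⟩
  have hnull : μ (K \ f '' K) = 0 := by
    rw [measure_sdiff himage (hK.image hf.continuous).measurableSet.nullMeasurableSet
      (hK.image hf.continuous).measure_ne_top, hvol, tsub_self]
  have hmap := map_withDensity_abs_det_fderiv_eq_addHaar μ nullMeasurableSet_univ
    (fun z _ => (hf z).hasFDerivAt.hasFDerivWithinAt) hinj.injOn
  refine ⟨hf.continuous.measurable, ?_⟩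
  have hae : ∀ᵐ z ∂μ, z ∈ range f := measure_mono_null hrange hnull
  simpa only [hdet, ENNReal.ofReal_one, withDensity_const, one_smul, Measure.restrict_univ,
    image_univ, Measure.restrict_eq_self_of_ae_mem hae] using hmap

theorem integral_mul_fderiv_eq_neg_of_hasCompactSupport {E : Type*} [NormedAddCommGroup E]
    [NormedSpace ℝ E] [FiniteDimensional ℝ E] [MeasurableSpace E] [BorelSpace E] (μ : Measure E)
    [μ.IsAddHaarMeasure] {f g : E → ℝ} (hf : ContDiff ℝ 1 f) (hg : ContDiff ℝ 1 g)
    (hgc : HasCompactSupport g) (v : E) :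
    ∫ z, f z * fderiv ℝ g z v ∂μ = -∫ z, fderiv ℝ f z v * g z ∂μ := by
  have hf' : Continuous fun z => fderiv ℝ f z v :=
    (hf.continuous_fderiv one_ne_zero).clm_apply continuous_const
  have hg' : Continuous fun z => fderiv ℝ g z v :=
    (hg.continuous_fderiv one_ne_zero).clm_apply continuous_const
  exact integral_mul_fderiv_eq_neg_fderiv_mul_of_integrable
    ((hf'.mul hg.continuous).integrable_of_hasCompactSupport hgc.mul_left)
    ((hf.continuous.mul hg').integrable_of_hasCompactSupport (hgc.fderiv_apply ℝ v).mul_left)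
    ((hf.continuous.mul hg.continuous).integrable_of_hasCompactSupport hgc.mul_left)
    (fun z _ => hf.differentiable one_ne_zero z) (fun z _ => hg.differentiable one_ne_zero z)

end Measure

section AreaForm

theorem omega0_swap (u v : ℝ × ℝ) : omega0 u v = -omega0 v u := by
  simp only [omega0]
  ring

theorem det_eq_omega0 (A : (ℝ × ℝ) →L[ℝ] ℝ × ℝ) : A.det = omega0 (A (1, 0)) (A (0, 1)) := by
  rw [ContinuousLinearMap.det, ← LinearMap.det_toMatrix (Module.Basis.finTwoProd ℝ),
    Matrix.det_fin_two]
  simp only [LinearMap.toMatrix_apply, Module.Basis.finTwoProd_zero, Module.Basis.finTwoProd_one,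
    Module.Basis.coe_finTwoProd_repr, ContinuousLinearMap.coe_coe, Matrix.cons_val_zero,
    Matrix.cons_val_one, omega0]
  ring

theorem hasDerivAt_omega0 {u v : ℝ → ℝ × ℝ} {u' v' : ℝ × ℝ} {t : ℝ} (hu : HasDerivAt u u' t)
    (hv : HasDerivAt v v' t) :
    HasDerivAt (fun s => omega0 (u s) (v s)) (omega0 u' (v t) + omega0 (u t) v') t := by
  have hfst {w : ℝ → ℝ × ℝ} {w'} (hw : HasDerivAt w w' t) :=
    (ContinuousLinearMap.fst ℝ ℝ ℝ).hasFDerivAt.comp_hasDerivAt t hw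
  have hsnd {w : ℝ → ℝ × ℝ} {w'} (hw : HasDerivAt w w' t) :=
    (ContinuousLinearMap.snd ℝ ℝ ℝ).hasFDerivAt.comp_hasDerivAt t hw
  refine (((hfst hu).mul (hsnd hv)).sub ((hsnd hu).mul (hfst hv))).congr_deriv ?_
  simp only [omega0, ContinuousLinearMap.coe_fst', ContinuousLinearMap.coe_snd',
    Function.comp_apply]
  ring

/-- The isomorphism from covectors to vectors inverse to `v ↦ ω₀(v, ·)`; it sends `dH` to the
Hamiltonian vector field of `H`. -/
def omegaSharp : ((ℝ × ℝ) →L[ℝ] ℝ) →L[ℝ] ℝ × ℝ :=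
  (ContinuousLinearMap.apply ℝ ℝ ((0, 1) : ℝ × ℝ)).prod
    (-ContinuousLinearMap.apply ℝ ℝ ((1, 0) : ℝ × ℝ))

theorem apply_eq_fst_mul_add_snd_mul (α : (ℝ × ℝ) →L[ℝ] ℝ) (v : ℝ × ℝ) :
    α v = v.1 * α (1, 0) + v.2 * α (0, 1) := by
  have hv : v = v.1 • ((1, 0) : ℝ × ℝ) + v.2 • ((0, 1) : ℝ × ℝ) := by ext <;> simp
  conv_lhs => rw [hv]
  simp only [map_add, map_smul, smul_eq_mul]

theorem omega0_omegaSharp (α : (ℝ × ℝ) →L[ℝ] ℝ) (v : ℝ × ℝ) : omega0 (omegaSharp α) v = α v := by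
  rw [apply_eq_fst_mul_add_snd_mul α v]
  change α (0, 1) * v.2 - -α (1, 0) * v.1 = _
  ring

theorem apply_omegaSharp (α β : (ℝ × ℝ) →L[ℝ] ℝ) :
    α (omegaSharp β) = α (1, 0) * β (0, 1) - α (0, 1) * β (1, 0) := by
  rw [apply_eq_fst_mul_add_snd_mul α]
  change β (0, 1) * α (1, 0) + -β (1, 0) * α (0, 1) = _
  ring

end AreaForm

section Hamiltonian

variable {H : ℝ → ℝ × ℝ → ℝ}

theorem hamVF_eq_omegaSharp (H : ℝ → ℝ × ℝ → ℝ) (t : ℝ) (z : ℝ × ℝ) :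
    hamVF H t z = omegaSharp (fderiv ℝ (H t) z) := rfl

theorem contDiff_hamVF (hH : ContDiff ℝ 2 (Function.uncurry H)) :
    ContDiff ℝ 1 (Function.uncurry (hamVF H)) :=
  omegaSharp.contDiff.comp (contDiff_fderiv_slice hH one_add_one_eq_two.le)

theorem hasCompactSupport_hamVF (hHc : HasCompactSupport (Function.uncurry H)) :
    HasCompactSupport (Function.uncurry (hamVF H)) :=
  (hasCompactSupport_fderiv_slice hHc).comp_left (map_zero omegaSharp)

theorem fderiv_hamVF {t : ℝ} (hH : ContDiff ℝ 2 (H t)) (z : ℝ × ℝ) :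
    fderiv ℝ (hamVF H t) z = omegaSharp.comp (fderiv ℝ (fderiv ℝ (H t)) z) :=
  (omegaSharp.hasFDerivAt.comp z
    ((hH.fderiv_right one_add_one_eq_two.le).differentiable one_ne_zero z).hasFDerivAt).fderiv

theorem omega0_fderiv_hamVF_add {t : ℝ} (hH : ContDiff ℝ 2 (H t)) (z u v : ℝ × ℝ) :
    omega0 (fderiv ℝ (hamVF H t) z u) v + omega0 u (fderiv ℝ (hamVF H t) z v) = 0 := by
  have hsymm : IsSymmSndFDerivAt ℝ (H t) z :=
    hH.contDiffAt.isSymmSndFDerivAt (minSmoothness_of_isRCLikeNormedField).le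
  rw [omega0_swap u, fderiv_hamVF hH, ContinuousLinearMap.comp_apply,
    ContinuousLinearMap.comp_apply, omega0_omegaSharp, omega0_omegaSharp, hsymm u v, add_neg_cancel]

theorem IsFlow.det_fderiv_eq_one_of_hamVF {φ : ℝ → ℝ × ℝ → ℝ × ℝ} (hφ : IsFlow (hamVF H) φ)
    (hH : ContDiff ℝ 2 (Function.uncurry H)) {M : ℝ≥0} (hV : ∀ t, LipschitzWith M (hamVF H t))
    (t : ℝ) (z : ℝ × ℝ) : (fderiv ℝ (φ t) z).det = 1 := by
  have hVs := contDiff_hamVF hH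
  have hD (s : ℝ) (u : ℝ × ℝ) : HasDerivAt (fun r => fderiv ℝ (φ r) z u)
      (fderiv ℝ (hamVF H s) (φ s z) (fderiv ℝ (φ s) z u)) s := by
    simpa using (hφ.hasDerivAt_fderiv hV
      (fun r => (contDiff_slice hVs r).differentiable one_ne_zero)
      (continuous_fderiv_slice hVs) s z).clm_apply
      (hasDerivAt_const s u)
  have hω (s : ℝ) : HasDerivAt
      (fun r => omega0 (fderiv ℝ (φ r) z (1, 0)) (fderiv ℝ (φ r) z (0, 1))) 0 s :=
    (hasDerivAt_omega0 (hD s _) (hD s _)).congr_deriv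
      (omega0_fderiv_hamVF_add (contDiff_slice hH s) _ _ _)
  have hφ0 : φ 0 = id := funext hφ.map_zero
  calc (fderiv ℝ (φ t) z).det = omega0 (fderiv ℝ (φ t) z (1, 0)) (fderiv ℝ (φ t) z (0, 1)) :=
        det_eq_omega0 _
    _ = omega0 (fderiv ℝ (φ 0) z (1, 0)) (fderiv ℝ (φ 0) z (0, 1)) :=
        is_const_of_deriv_eq_zero (fun s => (hω s).differentiableAt) (fun s => (hω s).deriv) t 0
    _ = 1 := by simp [hφ0, omega0]

end Hamiltonian

section Calabi

variable {H : ℝ → ℝ × ℝ → ℝ} {l : OneForm}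

/-- The function `l(X_{H_t}) + H_t`, whose integral along the trajectories of the Hamiltonian flow
is the action. -/
def actionIntegrand (l : OneForm) (H : ℝ → ℝ × ℝ → ℝ) (t : ℝ) (z : ℝ × ℝ) : ℝ :=
  l z (hamVF H t z) + H t z

theorem contDiff_actionIntegrand (hH : ContDiff ℝ 2 (Function.uncurry H)) (hl : ContDiff ℝ 1 l) :
    ContDiff ℝ 1 (Function.uncurry (actionIntegrand l H)) :=
  ((hl.comp contDiff_snd).clm_apply (contDiff_hamVF hH)).add (hH.of_le one_le_two)

theorem hasCompactSupport_actionIntegrand (hHc : HasCompactSupport (Function.uncurry H))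
    (l : OneForm) : HasCompactSupport (Function.uncurry (actionIntegrand l H)) :=
  (hasCompactSupport_clm_apply (fun p : ℝ × ℝ × ℝ => l p.2) (hasCompactSupport_hamVF hHc)).add hHc

theorem lieDerivative_hamVF (hl : Differentiable ℝ l)
    (hdl : ∀ z u v, fderiv ℝ l z u v - fderiv ℝ l z v u = omega0 u v) {t : ℝ}
    (hH : ContDiff ℝ 2 (H t)) (z : ℝ × ℝ) :
    lieDerivative (hamVF H t) l z = fderiv ℝ (actionIntegrand l H t) z := by
  have hX : DifferentiableAt ℝ (hamVF H t) z :=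
    (omegaSharp.contDiff.comp (hH.fderiv_right one_add_one_eq_two.le)).differentiable one_ne_zero z
  have hG : HasFDerivAt (actionIntegrand l H t) _ z := ((hl z).hasFDerivAt.clm_apply
    hX.hasFDerivAt).add (hH.differentiable two_ne_zero z).hasFDerivAt
  rw [hG.fderiv]
  refine ContinuousLinearMap.ext fun v => ?_
  simp only [lieDerivative, add_apply, ContinuousLinearMap.comp_apply,
    ContinuousLinearMap.flip_apply, ← omega0_omegaSharp (fderiv ℝ (H t) z),
    ← hamVF_eq_omegaSharp, ← hdl z]
  ring

theorem integral_apply_omegaSharp_fderiv (hl : ContDiff ℝ 1 l)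
    (hdl : ∀ z u v, fderiv ℝ l z u v - fderiv ℝ l z v u = omega0 u v) {h : ℝ × ℝ → ℝ}
    (hh : ContDiff ℝ 1 h) (hhc : HasCompactSupport h) :
    ∫ z, l z (omegaSharp (fderiv ℝ h z)) = ∫ z, h z := by
  have hlv (v : ℝ × ℝ) : ContDiff ℝ 1 fun z => l z v := hl.clm_apply contDiff_const
  have hl' (u v z : ℝ × ℝ) : fderiv ℝ (fun y => l y u) z v = fderiv ℝ l z v u := by
    rw [fderiv_clm_apply (hl.differentiable one_ne_zero z) (differentiableAt_const u)]
    simp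
  have hint (u v : ℝ × ℝ) : Integrable fun z => l z u * fderiv ℝ h z v :=
    ((hlv u).continuous.mul ((hh.continuous_fderiv one_ne_zero).clm_apply
      continuous_const)).integrable_of_hasCompactSupport (hhc.fderiv_apply ℝ v).mul_left
  have hint' (u v : ℝ × ℝ) : Integrable fun z => fderiv ℝ l z v u * h z :=
    ((((hl.continuous_fderiv one_ne_zero).clm_apply continuous_const).clm_apply
      continuous_const).mul hh.continuous).integrable_of_hasCompactSupport hhc.mul_left
  have hparts (u v : ℝ × ℝ) :
      ∫ z, l z u * fderiv ℝ h z v = -∫ z, fderiv ℝ l z v u * h z := by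
    simpa only [hl'] using integral_mul_fderiv_eq_neg_of_hasCompactSupport volume (hlv u) hh hhc v
  calc ∫ z, l z (omegaSharp (fderiv ℝ h z))
      = ∫ z, (l z (1, 0) * fderiv ℝ h z (0, 1) - l z (0, 1) * fderiv ℝ h z (1, 0)) := by
        simp only [apply_omegaSharp]
    _ = ∫ z, (fderiv ℝ l z (1, 0) (0, 1) * h z - fderiv ℝ l z (0, 1) (1, 0) * h z) := by
        rw [integral_sub (hint _ _) (hint _ _), integral_sub (hint' _ _) (hint' _ _), hparts,
          hparts]
        ring
    _ = ∫ z, h z := by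
        simp only [← sub_mul, hdl, omega0, mul_one, mul_zero, sub_zero, one_mul]

theorem integral_actionIntegrand (hl : ContDiff ℝ 1 l)
    (hdl : ∀ z u v, fderiv ℝ l z u v - fderiv ℝ l z v u = omega0 u v) {t : ℝ}
    (hH : ContDiff ℝ 1 (H t)) (hHc : HasCompactSupport (H t)) :
    ∫ z, actionIntegrand l H t z = 2 * ∫ z, H t z := by
  have hX : Integrable fun z => l z (hamVF H t z) :=
    (hl.continuous.clm_apply (omegaSharp.continuous.comp
      (hH.continuous_fderiv one_ne_zero))).integrable_of_hasCompactSupport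
      (hasCompactSupport_clm_apply l ((hHc.fderiv ℝ).comp_left (map_zero omegaSharp)))
  have hHi : Integrable (H t) := hH.continuous.integrable_of_hasCompactSupport hHc
  calc ∫ z, actionIntegrand l H t z = (∫ z, l z (hamVF H t z)) + ∫ z, H t z := integral_add hX hHi
    _ = (∫ z, H t z) + ∫ z, H t z :=
        congrArg (· + _) (integral_apply_omegaSharp_fderiv hl hdl hH hHc)
    _ = 2 * ∫ z, H t z := (two_mul _).symm

variable {φ : ℝ → ℝ × ℝ → ℝ × ℝ}

theorem IsFlow.hasFDerivAt_integral_actionIntegrand (hφ : IsFlow (hamVF H) φ)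
    (hH : ContDiff ℝ 2 (Function.uncurry H)) (hHc : HasCompactSupport (Function.uncurry H))
    (hl : ContDiff ℝ 1 l)
    (hdl : ∀ z u v, fderiv ℝ l z u v - fderiv ℝ l z v u = omega0 u v) (T : ℝ) (z : ℝ × ℝ) :
    HasFDerivAt (fun y => ∫ t in 0..T, actionIntegrand l H t (φ t y))
      (pullbackForm (φ T) l z - l z) z := by
  have hX := contDiff_hamVF hH
  have hG := contDiff_actionIntegrand hH hl
  obtain ⟨M, hM⟩ := exists_forall_lipschitzWith_slice hX (hasCompactSupport_hamVF hHc)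
  obtain ⟨N, hN⟩ := exists_forall_lipschitzWith_slice hG (hasCompactSupport_actionIntegrand hHc l)
  have h := hφ.hasFDerivAt_integral_comp_of_lieDerivative_eq hM
    (fun t => (contDiff_slice hX t).differentiable one_ne_zero)
    (continuous_fderiv_slice hX) hG.continuous hN
    (fun t => (contDiff_slice hG t).differentiable one_ne_zero)
    (continuous_fderiv_slice hG)
    (hl.differentiable one_ne_zero)
    (fun t => lieDerivative_hamVF (hl.differentiable one_ne_zero) hdl (contDiff_slice hH t)) 0 T z
  have hφ0 : φ 0 = id := funext hφ.map_zero
  simpa only [pullbackForm, hφ0, id, fderiv_id, ContinuousLinearMap.comp_id] using h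

theorem IsFlow.measurePreserving_of_hamVF (hφ : IsFlow (hamVF H) φ)
    (hH : ContDiff ℝ 2 (Function.uncurry H)) (hHc : HasCompactSupport (Function.uncurry H))
    (t : ℝ) : MeasurePreserving (φ t) := by
  have hX := contDiff_hamVF hH
  have hXc := hasCompactSupport_hamVF hHc
  obtain ⟨M, hM⟩ := exists_forall_lipschitzWith_slice hX hXc
  obtain ⟨K, hK, hXK⟩ := exists_isCompact_forall_slice_eq_zero hXc
  refine measurePreserving_of_abs_det_fderiv_eq_one volume
    (hφ.differentiable hM (fun s => (contDiff_slice hX s).differentiable one_ne_zero)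
      (continuous_fderiv_slice hX) t)
    (hφ.injective hM t) (fun z => ?_) hK
    fun z hz => hφ.eq_self_of_forall_eq_zero hM (fun s => hXK s z hz) t
  rw [hφ.det_fderiv_eq_one_of_hamVF hH hM, abs_one]

theorem IsFlow.integral_integral_actionIntegrand (hφ : IsFlow (hamVF H) φ)
    (hH : ContDiff ℝ 2 (Function.uncurry H)) (hHc : HasCompactSupport (Function.uncurry H))
    (hl : ContDiff ℝ 1 l)
    (hdl : ∀ z u v, fderiv ℝ l z u v - fderiv ℝ l z v u = omega0 u v) (T : ℝ) :
    ∫ z, ∫ t in 0..T, actionIntegrand l H t (φ t z) = 2 * ∫ t in 0..T, ∫ z, H t z := by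
  have hX := contDiff_hamVF hH
  have hXc := hasCompactSupport_hamVF hHc
  have hG := contDiff_actionIntegrand hH hl
  obtain ⟨M, hM⟩ := exists_forall_lipschitzWith_slice hX hXc
  have hGφ : Continuous (Function.uncurry fun t z => actionIntegrand l H t (φ t z)) :=
    hG.continuous.comp (continuous_fst.prodMk (hφ.continuous_uncurry hM))
  have hslice (t : ℝ) : ∫ z, actionIntegrand l H t (φ t z) = 2 * ∫ z, H t z := by
    have hemb : MeasurableEmbedding (φ t) :=
      (hφ.lipschitzWith hM t).continuous.measurableEmbedding (hφ.injective hM t)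
    rw [(hφ.measurePreserving_of_hamVF hH hHc t).integral_comp hemb]
    exact integral_actionIntegrand hl hdl ((contDiff_slice hH t).of_le one_le_two)
      (hasCompactSupport_slice hHc t)
  calc ∫ z, ∫ t in 0..T, actionIntegrand l H t (φ t z)
      = ∫ t in 0..T, ∫ z, actionIntegrand l H t (φ t z) := by
        simp only [intervalIntegral.intervalIntegral_eq_integral_uIoc, integral_smul]
        exact congrArg _ (integral_integral_swap_of_hasCompactSupport hGφ
          (hφ.hasCompactSupport_comp hM hXc (hasCompactSupport_actionIntegrand hHc l))).symm
    _ = 2 * ∫ t in 0..T, ∫ z, H t z := by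
        simp only [hslice, intervalIntegral.integral_const_mul]

end Calabi

theorem statement10_general (H : ℝ → ℝ × ℝ → ℝ) (hH : ContDiff ℝ 2 (Function.uncurry H))
    (hHc : HasCompactSupport (Function.uncurry H)) (φ : ℝ → ℝ × ℝ → ℝ × ℝ)
    (hφ : IsFlow (hamVF H) φ) (T : ℝ) (l : OneForm) (hl : ContDiff ℝ 1 l)
    (hdl : ∀ z u v, fderiv ℝ l z u v - fderiv ℝ l z v u = omega0 u v) (σ : ℝ × ℝ → ℝ)
    (hσ : Differentiable ℝ σ) (hσc : HasCompactSupport σ)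
    (hdσ : ∀ z, fderiv ℝ σ z = pullbackForm (φ T) l z - l z) :
    ∫ z, σ z = 2 * ∫ t in 0..T, ∫ z, H t z := by
  obtain ⟨M, hM⟩ :=
    exists_forall_lipschitzWith_slice (contDiff_hamVF hH) (hasCompactSupport_hamVF hHc)
  have hderiv := hφ.hasFDerivAt_integral_actionIntegrand hH hHc hl hdl T
  have hσ_eq : σ = fun z => ∫ t in 0..T, actionIntegrand l H t (φ t z) :=
    eq_of_fderiv_eq_of_hasCompactSupport hσ (fun z => (hderiv z).differentiableAt) hσc
      (hasCompactSupport_intervalIntegral (hφ.hasCompactSupport_comp hM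
        (hasCompactSupport_hamVF hHc) (hasCompactSupport_actionIntegrand hHc l)) 0 T)
      fun z => (hdσ z).trans (hderiv z).fderiv.symm
  rw [hσ_eq]
  exact hφ.integral_integral_actionIntegrand hH hHc hl hdl T

/-- The Calabi invariant of the time-1 map of a compactly supported Hamiltonian flow
is given by `CAL(φ) = 2 ∫₀¹ ∫_{ℝ²} H(t,z) dz dt`. -/
theorem statement10 (H : ℝ → ℝ × ℝ → ℝ)
    (hH : ContDiff ℝ (⊤ : ℕ∞) (fun p : ℝ × (ℝ × ℝ) => H p.1 p.2))
    (hHsupp : HasCompactSupport (fun p : ℝ × (ℝ × ℝ) => H p.1 p.2))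
    (φ : ℝ → ℝ × ℝ → ℝ × ℝ)
    (hφ0 : ∀ z, φ 0 z = z)
    (hflow : ∀ t z, HasDerivAt (fun s => φ s z) (hamVF H t (φ t z)) t)
    (l : OneForm) (hl : IsPrimitive l)
    (σ : ℝ × ℝ → ℝ) (hσ : IsAction (φ 1) l σ) :
    ∫ z : ℝ × ℝ, σ z = 2 * ∫ t in (0:ℝ)..1, ∫ z : ℝ × ℝ, H t z := by
  obtain ⟨hσs, hσc, hdσ⟩ := hσ
  exact statement10_general H (hH.of_le (WithTop.coe_le_coe.2 (le_top (a := (2 : ℕ∞))))) hHsupp φ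
    ⟨hφ0, hflow⟩ 1 l (hl.1.of_le (WithTop.coe_le_coe.2 le_top)) hl.2 σ
    (hσs.differentiable (by simp)) hσc hdσ
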